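/- Let (A_j)_{j≥1} be independent, identically distributed, strictly positive random variables on a probability space, and assume E[A_1^λ] < ∞ for every λ ∈ ℝ. Then the limit lim_{n→∞} (1/n) · ln E[ ( Σ_{r=0}^{n} Π_{j=1}^{r} A_j^{−1} )^{−1} ] exists and equals ln ( inf_{λ ∈ [0,1]} E[A_1^λ] ), where the empty product (r = 0) is 1. -/

import Mathlib

open MeasureTheory

section Helpers
open ProbabilityTheory Filter Topology Finset

lemma hit_sum_pow_le (s : Finset ℕ) (y : ℕ → ℝ) (hy : ∀ r, 0 < y r) (k : ℕ) :
    ∑ r ∈ s, y r ^ (k + 1) ≤ (∑ r ∈ s, y r) ^ (k + 1) := by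
  rw [pow_succ, Finset.mul_sum]
  refine Finset.sum_le_sum fun r hr => ?_
  rw [pow_succ]
  have h1 : y r ≤ ∑ r ∈ s, y r := Finset.single_le_sum (fun i _ => (hy i).le) hr
  have h0 := (hy r).le
  gcongr

lemma hit_tangent (s : Finset ℕ) (hs : s.Nonempty) (y : ℕ → ℝ) (hy : ∀ r, 0 < y r) (k : ℕ)
    (a : ℝ) (ha : 0 < a) :
    (a ^ (k + 1))⁻¹ * (1 + ((k : ℝ) + 1) * (1 - (∑ r ∈ s, y r) / a))
      ≤ (∑ r ∈ s, y r ^ (k + 1))⁻¹ := by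
  have hY : 0 < ∑ r ∈ s, y r := Finset.sum_pos (fun i _ => hy i) hs
  have hP : 0 < ∑ r ∈ s, y r ^ (k + 1) := Finset.sum_pos (fun i _ => pow_pos (hy i) _) hs
  set Y := ∑ r ∈ s, y r with hYdef
  have h1 : (Y ^ (k + 1))⁻¹ ≤ (∑ r ∈ s, y r ^ (k + 1))⁻¹ :=
    inv_anti₀ hP (hit_sum_pow_le s y hy k)
  refine le_trans ?_ h1
  have h2 := one_add_mul_le_pow (a := a / Y - 1) (by have : 0 < a / Y := by positivity
                                                     linarith) (k + 1)
  have h3 : 1 - Y / a ≤ a / Y - 1 := by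
    have : a / Y - 1 - (1 - Y / a) = (a - Y) ^ 2 / (a * Y) := by field_simp
    have h4 : 0 ≤ (a - Y) ^ 2 / (a * Y) := by positivity
    linarith
  have h5 : 1 + ((k : ℝ) + 1) * (1 - Y / a) ≤ (a / Y) ^ (k + 1) := by
    have : ((k : ℝ) + 1) * (1 - Y / a) ≤ ((k : ℝ) + 1) * (a / Y - 1) := by gcongr
    push_cast at h2
    calc _ ≤ 1 + ((k : ℝ) + 1) * (a / Y - 1) := by linarith
      _ ≤ _ := by simpa using h2
  calc _ ≤ (a ^ (k + 1))⁻¹ * (a / Y) ^ (k + 1) := by gcongr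
    _ = _ := by rw [div_pow]; field_simp

lemma hit_moment {Ω : Type*} [MeasurableSpace Ω] (μ : Measure Ω) [IsProbabilityMeasure μ]
    (X : ℕ → Ω → ℝ) (hm : ∀ j, Measurable (X j)) (hind : iIndepFun X μ)
    (hid : ∀ j, IdentDistrib (X j) (X 0) μ μ)
    (hI : ∀ l : ℝ, Integrable (fun ω => Real.exp (l * X 0 ω)) μ) (n : ℕ) (e : ℕ → ℝ) :
    Integrable (fun ω => Real.exp (∑ j ∈ range n, e j * X j ω)) μ ∧
    ∫ ω, Real.exp (∑ j ∈ range n, e j * X j ω) ∂μ = ∏ j ∈ range n, mgf (X 0) μ (e j) := by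
  have hind' : iIndepFun (fun j ω => e j * X j ω) μ :=
    hind.comp (fun j x => e j * x) (fun j => measurable_const_mul _)
  have hm' : ∀ j, Measurable (fun ω => e j * X j ω) := fun j => (hm j).const_mul _
  have hid' : ∀ j, IdentDistrib (fun ω => Real.exp (e j * X j ω))
      (fun ω => Real.exp (e j * X 0 ω)) μ μ := fun j =>
    (hid j).comp (u := fun x => Real.exp (e j * x)) (by fun_prop)
  constructor
  · have := hind'.integrable_exp_mul_sum (t := 1) hm' (s := range n) (fun i _ => by
      simp only [one_mul]
      exact (hid' i).integrable_iff.2 (hI _))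
    simpa using this
  · have := hind'.mgf_sum (t := 1) hm' (range n)
    simp only [mgf, one_mul, Finset.sum_apply] at this
    rw [this]
    exact Finset.prod_congr rfl fun j _ => (hid' j).integral_eq

lemma hit_lower {Ω : Type*} [MeasurableSpace Ω] (μ : Measure Ω) [IsProbabilityMeasure μ]
    (X : ℕ → Ω → ℝ) (hm : ∀ j, Measurable (X j)) (hind : iIndepFun X μ)
    (hid : ∀ j, IdentDistrib (X j) (X 0) μ μ)
    (hI : ∀ l : ℝ, Integrable (fun ω => Real.exp (l * X 0 ω)) μ) (n k : ℕ) (l q : ℝ)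
    (hq : 0 < q)
    (h1 : mgf (X 0) μ (l + l * (1 / ((k : ℝ) + 1)) - 1 / ((k : ℝ) + 1)) ≤ mgf (X 0) μ l * q)
    (h2 : mgf (X 0) μ (l + l * (1 / ((k : ℝ) + 1))) ≤ mgf (X 0) μ l * q)
    (hZ : Integrable (fun ω => (∑ r ∈ range (n + 1),
        Real.exp (-∑ j ∈ range r, X j ω))⁻¹) μ) :
    ((((n : ℝ) + 1) * q ^ n) ^ (k + 1))⁻¹ * mgf (X 0) μ l ^ n ≤
      ∫ ω, (∑ r ∈ range (n + 1), Real.exp (-∑ j ∈ range r, X j ω))⁻¹ ∂μ := by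
  set φ := mgf (X 0) μ with hφ
  set t : ℝ := 1 / ((k : ℝ) + 1) with ht
  have htk : t * ((k : ℝ) + 1) = 1 := by rw [ht]; field_simp
  set a : ℝ := ((n : ℝ) + 1) * q ^ n with hadef
  have ha : 0 < a := by positivity
  let e : ℕ → ℕ → ℝ := fun r j => l + l * t - (if j < r then t else 0)
  have hM := fun r => hit_moment μ X hm hind hid hI n (e r)
  have hW := hit_moment μ X hm hind hid hI n (fun _ => l)
  simp only [prod_const, card_range] at hW
  have hφ0 : ∀ s, 0 ≤ φ s := fun s => mgf_nonneg
  have hbound : ∀ r, ∫ ω, Real.exp (∑ j ∈ range n, e r j * X j ω) ∂μ ≤ (φ l * q) ^ n := by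
    intro r
    rw [(hM r).2]
    calc _ ≤ ∏ j ∈ range n, (φ l * q) := by
          refine Finset.prod_le_prod (fun j _ => hφ0 _) fun j _ => ?_
          simp only [e]
          split_ifs
          · exact h1
          · simpa using h2
      _ = _ := by simp
  have hpt : ∀ ω, (a ^ (k + 1))⁻¹ * ((1 + ((k : ℝ) + 1)) * Real.exp (∑ j ∈ range n, l * X j ω)
      - ((k : ℝ) + 1) / a * ∑ r ∈ range (n + 1), Real.exp (∑ j ∈ range n, e r j * X j ω))
      ≤ (∑ r ∈ range (n + 1), Real.exp (-∑ j ∈ range r, X j ω))⁻¹ := by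
    intro ω
    set W := Real.exp (∑ j ∈ range n, l * X j ω) with hWd
    have hWpos : 0 < W := Real.exp_pos _
    let y : ℕ → ℝ := fun r => Real.exp (t * (∑ j ∈ range n, l * X j ω - ∑ j ∈ range r, X j ω))
    have hy : ∀ r, 0 < y r := fun r => Real.exp_pos _
    have hyp : ∀ r, Real.exp (-∑ j ∈ range r, X j ω) = W⁻¹ * y r ^ (k + 1) := by
      intro r
      simp only [y, hWd]
      rw [← Real.exp_nat_mul, ← Real.exp_neg, ← Real.exp_add]
      congr 1
      push_cast
      linear_combination (-(∑ j ∈ range n, l * X j ω - ∑ j ∈ range r, X j ω)) * htk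
    have hye : ∀ r ∈ range (n + 1), Real.exp (∑ j ∈ range n, e r j * X j ω) = W * y r := by
      intro r hr
      simp only [y, hWd]
      rw [← Real.exp_add]
      congr 1
      have hrn : r ≤ n := by simpa [Nat.lt_succ_iff] using hr
      have h3 : ∑ j ∈ range r, X j ω = ∑ j ∈ range n, (if j < r then X j ω else 0) := by
        rw [← Finset.sum_filter]
        congr 1
        ext j
        simp only [mem_range, mem_filter]
        omega
      rw [h3, ← Finset.sum_sub_distrib, Finset.mul_sum, ← Finset.sum_add_distrib]
      refine Finset.sum_congr rfl fun j _ => ?_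
      simp only [e]
      split_ifs <;> ring
    rw [Finset.sum_congr rfl hye, Finset.sum_congr rfl (fun r _ => hyp r), ← Finset.mul_sum,
      ← Finset.mul_sum, mul_inv, inv_inv]
    have h4 := hit_tangent (range (n + 1)) ⟨0, by simp⟩ y hy k a ha
    calc _ = W * ((a ^ (k + 1))⁻¹ * (1 + ((k : ℝ) + 1) * (1 - (∑ r ∈ range (n + 1), y r) / a))) := by
          ring
      _ ≤ _ := by gcongr
  have hsumI : Integrable (fun ω => ∑ r ∈ range (n + 1),
      Real.exp (∑ j ∈ range n, e r j * X j ω)) μ :=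
    integrable_finset_sum _ fun r _ => (hM r).1
  have hint := integral_mono (((hW.1.const_mul (1 + ((k : ℝ) + 1))).sub
    (hsumI.const_mul (((k : ℝ) + 1) / a))).const_mul ((a ^ (k + 1))⁻¹)) hZ hpt
  refine le_trans ?_ hint
  simp only [Pi.sub_apply]
  rw [integral_const_mul, integral_sub (hW.1.const_mul _) (hsumI.const_mul _), integral_const_mul,
    integral_const_mul, integral_finset_sum _ (fun r _ => (hM r).1), hW.2]
  have h5 : ∑ r ∈ range (n + 1), ∫ ω, Real.exp (∑ j ∈ range n, e r j * X j ω) ∂μ ≤ a * φ l ^ n := by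
    calc _ ≤ ∑ r ∈ range (n + 1), (φ l * q) ^ n := Finset.sum_le_sum fun r _ => hbound r
      _ = _ := by simp [hadef, mul_pow]; ring
  have h6 : ((k : ℝ) + 1) / a * ∑ r ∈ range (n + 1), ∫ ω, Real.exp (∑ j ∈ range n, e r j * X j ω) ∂μ
      ≤ ((k : ℝ) + 1) / a * (a * φ l ^ n) := by gcongr
  have h7 : ((k : ℝ) + 1) / a * (a * φ l ^ n) = ((k : ℝ) + 1) * φ l ^ n := by field_simp
  gcongr
  linarith

lemma hit_deriv (g : ℝ → ℝ) (d : ℝ) (hg : HasDerivAt g d 0)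
    (hmin : ∀ s ∈ Set.Icc (0 : ℝ) 1, g 0 ≤ g (-s)) (ε : ℝ) (hε : 0 < ε) :
    ∀ᶠ t in 𝓝[>] (0 : ℝ), g t ≤ g 0 + ε * t := by
  have h := (hasDerivAt_iff_isLittleO.1 hg).def (half_pos hε)
  rw [Metric.eventually_nhds_iff] at h
  obtain ⟨δ, hδ, h⟩ := h
  have hm : ∀ᶠ t in 𝓝[>] (0 : ℝ), t < min δ 1 :=
    nhdsWithin_le_nhds (eventually_lt_nhds (lt_min hδ one_pos))
  filter_upwards [hm, self_mem_nhdsWithin] with t ht ht0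
  have ht0 : 0 < t := ht0
  have htδ := lt_of_lt_of_le ht (min_le_left _ _)
  have ht1 := lt_of_lt_of_le ht (min_le_right _ _)
  have ha := h (y := t) (by simpa [abs_of_pos ht0] using htδ)
  have hb := h (y := -t) (by simpa [abs_of_pos ht0] using htδ)
  simp only [sub_zero, smul_eq_mul, Real.norm_eq_abs, abs_neg, abs_of_pos ht0] at ha hb
  have ha' := (abs_le.1 ha).2
  have hb' := (abs_le.1 hb).2
  have := hmin t ⟨ht0.le, ht1.le⟩
  nlinarith

end Helpers

open ProbabilityTheory Filter Topology Finset

/-- Let `(A_j)_{j ≥ 1}` be i.i.d. strictly positive random variables (here `A j` stands for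
`A_{j+1}`, so `A 0` is `A_1`) with `E[A_1 ^ λ] < ∞` for every `λ ∈ ℝ`. Then
`(1/n) * ln E[(∑_{r=0}^n ∏_{j=1}^r A_j⁻¹)⁻¹]` converges, as `n → ∞`, to
`ln (inf_{λ ∈ [0,1]} E[A_1 ^ λ])`. -/
theorem annealed_hitting_exponential_rate
    {Ω : Type*} [MeasurableSpace Ω] (μ : Measure Ω) [IsProbabilityMeasure μ]
    (A : ℕ → Ω → ℝ)
    (hmeas : ∀ j, Measurable (A j))
    (hindep : ProbabilityTheory.iIndepFun A μ)
    (hident : ∀ j, ProbabilityTheory.IdentDistrib (A j) (A 0) μ μ)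
    (hpos : ∀ j ω, 0 < A j ω)
    (hmom : ∀ l : ℝ, Integrable (fun ω => A 0 ω ^ l) μ) :
    Filter.Tendsto
      (fun n : ℕ => (1 / (n : ℝ)) *
        Real.log (∫ ω,
          (∑ r ∈ Finset.range (n + 1), ∏ j ∈ Finset.range r, (A j ω)⁻¹)⁻¹ ∂μ))
      Filter.atTop
      (nhds (Real.log (⨅ l : Set.Icc (0:ℝ) 1, ∫ ω, A 0 ω ^ (l : ℝ) ∂μ))) := by
  let X : ℕ → Ω → ℝ := fun j ω => Real.log (A j ω)
  have hm : ∀ j, Measurable (X j) := fun j => (hmeas j).log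
  have hind : iIndepFun X μ := hindep.comp (fun _ => Real.log) (fun _ => Real.measurable_log)
  have hid : ∀ j, IdentDistrib (X j) (X 0) μ μ := fun j =>
    (hident j).comp Real.measurable_log
  have hrp : ∀ (l : ℝ) ω, A 0 ω ^ l = Real.exp (l * X 0 ω) := fun l ω => by
    rw [Real.rpow_def_of_pos (hpos 0 ω), mul_comm]
  have hI : ∀ l : ℝ, Integrable (fun ω => Real.exp (l * X 0 ω)) μ := fun l => by
    simpa only [hrp] using hmom l
  have hφeq : ∀ l : ℝ, ∫ ω, A 0 ω ^ l ∂μ = mgf (X 0) μ l := fun l => by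
    simp only [hrp, mgf]
  have hprod : ∀ r ω, ∏ j ∈ range r, (A j ω)⁻¹ = Real.exp (-∑ j ∈ range r, X j ω) := by
    intro r ω
    rw [← Finset.sum_neg_distrib, Real.exp_sum]
    refine Finset.prod_congr rfl fun j _ => ?_
    rw [Real.exp_neg, Real.exp_log (hpos j ω)]
  simp only [hφeq, hprod]
  set φ := mgf (X 0) μ with hφ
  have hset : integrableExpSet (X 0) μ = Set.univ := by
    ext l; simpa [integrableExpSet] using hI l
  have hder : ∀ l, ∃ d, HasDerivAt φ d l := fun l =>
    ⟨_, hasDerivAt_mgf (by rw [hset]; simp)⟩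
  have hcont : Continuous φ := continuous_iff_continuousAt.2 fun l => by
    obtain ⟨d, hd⟩ := hder l
    exact hd.continuousAt
  have hφpos : ∀ l, 0 < φ l := fun l => mgf_pos (hI l)
  obtain ⟨l, hl, hlmin⟩ := isCompact_Icc.exists_isMinOn (Set.nonempty_Icc.2 zero_le_one)
    (hcont.continuousOn (s := Set.Icc (0 : ℝ) 1))
  have hlmin : ∀ s ∈ Set.Icc (0 : ℝ) 1, φ l ≤ φ s := fun s hs => hlmin hs
  have hinf : (⨅ l : Set.Icc (0:ℝ) 1, φ l) = φ l := by
    haveI : Nonempty (Set.Icc (0 : ℝ) 1) := ⟨⟨l, hl⟩⟩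
    apply le_antisymm
    · exact ciInf_le (f := fun l : Set.Icc (0:ℝ) 1 => φ l)
        ⟨φ l, by rintro _ ⟨s, rfl⟩; exact hlmin _ s.2⟩ ⟨l, hl⟩
    · exact le_ciInf fun s => hlmin _ s.2
  rw [hinf]
  let Z : ℕ → Ω → ℝ := fun n ω => (∑ r ∈ range (n + 1), Real.exp (-∑ j ∈ range r, X j ω))⁻¹
  change Tendsto (fun n : ℕ => (1 / (n : ℝ)) * Real.log (∫ ω, Z n ω ∂μ)) atTop (𝓝 (Real.log (φ l)))
  have hZmeas : ∀ n, Measurable (Z n) := fun n => by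
    refine Measurable.inv (Finset.measurable_fun_sum _ fun r _ => Real.measurable_exp.comp ?_)
    exact (Finset.measurable_fun_sum _ fun j _ => hm j).neg
  have hZ0 : ∀ n ω, 0 ≤ Z n ω := fun n ω => by
    simp only [Z]; positivity
  have hZr : ∀ n ω, ∀ r ∈ range (n + 1), Z n ω ≤ Real.exp (∑ j ∈ range r, X j ω) := by
    intro n ω r hr
    have := Finset.single_le_sum (f := fun r => Real.exp (-∑ j ∈ range r, X j ω))
      (fun i _ => (Real.exp_pos _).le) hr
    have h2 := inv_anti₀ (Real.exp_pos _) this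
    rwa [← Real.exp_neg, neg_neg] at h2
  have hZ1 : ∀ n ω, Z n ω ≤ 1 := fun n ω => by simpa using hZr n ω 0 (by simp)
  have hZI : ∀ n, Integrable (Z n) μ := fun n =>
    Integrable.of_bound (hZmeas n).aestronglyMeasurable 1 (Eventually.of_forall fun ω => by
      rw [Real.norm_eq_abs, abs_of_nonneg (hZ0 n ω)]; exact hZ1 n ω)
  -- upper bound
  have hup : ∀ n, ∫ ω, Z n ω ∂μ ≤ φ l ^ n := by
    intro n
    have hW := hit_moment μ X hm hind hid hI n (fun _ => l)
    simp only [prod_const, card_range] at hW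
    rw [← hW.2]
    refine integral_mono (hZI n) hW.1 fun ω => ?_
    have h1 := hZr n ω n (by simp)
    have h2 := hZ1 n ω
    simp only [← Finset.mul_sum]
    rcases le_total 0 (∑ j ∈ range n, X j ω) with h | h
    · exact h2.trans (Real.one_le_exp (mul_nonneg hl.1 h))
    · refine h1.trans (Real.exp_le_exp.2 ?_)
      nlinarith [hl.2]
  -- lower bound
  have hlow : ∀ ε > 0, ∃ k : ℕ, ∀ n : ℕ,
      ((((n : ℝ) + 1) * (1 + ε * (1 / ((k : ℝ) + 1))) ^ n) ^ (k + 1))⁻¹ * φ l ^ n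
        ≤ ∫ ω, Z n ω ∂μ := by
    intro ε hε
    obtain ⟨d, hd⟩ := hder l
    have hg1 : HasDerivAt (fun t : ℝ => φ (l + l * t - t)) (d * (l * 1 - 1)) 0 := by
      have h1 : HasDerivAt (fun t : ℝ => l + l * t - t) (l * 1 - 1) 0 :=
        (((hasDerivAt_id (0 : ℝ)).const_mul l).const_add l).sub (hasDerivAt_id 0)
      exact HasDerivAt.comp (h₂ := φ) (0 : ℝ) (by simpa using hd) h1
    have hg2 : HasDerivAt (fun t : ℝ => φ (l + l * t)) (d * (l * 1)) 0 := by
      have h1 : HasDerivAt (fun t : ℝ => l + l * t) (l * 1) 0 :=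
        ((hasDerivAt_id (0 : ℝ)).const_mul l).const_add l
      exact HasDerivAt.comp (h₂ := φ) (0 : ℝ) (by simpa using hd) h1
    have e1 := hit_deriv _ _ hg1 (fun s hs => by
      simp only [mul_zero, add_zero, sub_zero]
      exact hlmin _ ⟨by nlinarith [hl.1, hl.2, hs.1, hs.2], by nlinarith [hl.1, hl.2, hs.1, hs.2]⟩)
      (φ l * ε) (mul_pos (hφpos l) hε)
    have e2 := hit_deriv _ _ hg2 (fun s hs => by
      simp only [mul_zero, add_zero]
      exact hlmin _ ⟨by nlinarith [hl.1, hl.2, hs.1, hs.2], by nlinarith [hl.1, hl.2, hs.1, hs.2]⟩)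
      (φ l * ε) (mul_pos (hφpos l) hε)
    have hseq : Tendsto (fun k : ℕ => 1 / ((k : ℝ) + 1)) atTop (𝓝[>] 0) :=
      tendsto_nhdsWithin_iff.2 ⟨tendsto_one_div_add_atTop_nhds_zero_nat,
        Eventually.of_forall fun k => by simp only [Set.mem_Ioi]; positivity⟩
    obtain ⟨k, hk1, hk2⟩ := (hseq.eventually (e1.and e2)).exists
    simp only [mul_zero, add_zero, sub_zero] at hk1 hk2
    refine ⟨k, fun n => ?_⟩
    exact hit_lower μ X hm hind hid hI n k l _ (by positivity)
      (hk1.trans (le_of_eq (by ring))) (hk2.trans (le_of_eq (by ring))) (hZI n)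
  have hZpos : ∀ n, 0 < ∫ ω, Z n ω ∂μ := fun n => by
    obtain ⟨k, hk⟩ := hlow 1 one_pos
    refine lt_of_lt_of_le ?_ (hk n)
    have := hφpos l
    positivity
  have hlog : Tendsto (fun n : ℕ => Real.log ((n : ℝ) + 1) / n) atTop (𝓝 0) := by
    have h1 : Tendsto (fun x : ℝ => Real.log x / x) atTop (𝓝 0) :=
      Real.isLittleO_log_id_atTop.tendsto_div_nhds_zero
    have h2 : Tendsto (fun n : ℕ => (n : ℝ) + 1) atTop atTop :=
      tendsto_atTop_add_const_right _ _ tendsto_natCast_atTop_atTop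
    have h3 := (h1.comp h2).mul ((tendsto_one_div_add_atTop_nhds_zero_nat (𝕜 := ℝ)).const_add 1 |>.const_mul 2)
    simp only [zero_mul] at h3
    refine squeeze_zero' (Eventually.of_forall fun n => ?_) ?_ h3
    · have : 0 ≤ Real.log ((n : ℝ) + 1) := Real.log_nonneg (by linarith [n.cast_nonneg (α := ℝ)])
      positivity
    · filter_upwards [eventually_ge_atTop 1] with n hn
      have hn : (1 : ℝ) ≤ n := by exact_mod_cast hn
      have : 0 ≤ Real.log ((n : ℝ) + 1) := Real.log_nonneg (by linarith)
      simp only [Function.comp]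
      rw [div_mul_eq_mul_div, div_le_div_iff₀ (by linarith) (by linarith)]
      have h4 : (0 : ℝ) ≤ 1 / ((n : ℝ) + 1) := by positivity
      have : Real.log ((n : ℝ) + 1) * ((n : ℝ) + 1) ≤ Real.log ((n : ℝ) + 1) * (2 * (1 + 1 / ((n : ℝ) + 1)) * n) := by
        gcongr
        nlinarith
      linarith
  rw [Metric.tendsto_nhds]
  intro ε hε
  obtain ⟨k, hk⟩ := hlow (ε / 2) (half_pos hε)
  have hlog' := hlog.const_mul ((k : ℝ) + 1)
  rw [mul_zero] at hlog'
  filter_upwards [hlog'.eventually (gt_mem_nhds (half_pos hε)), eventually_ge_atTop 1] with n hn hn1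
  have hn1 : (1 : ℝ) ≤ n := by exact_mod_cast hn1
  have hn0 : (0 : ℝ) < n := by linarith
  have hL := hφpos l
  have u := Real.log_le_log (hZpos n) (hup n)
  rw [Real.log_pow] at u
  set q : ℝ := 1 + ε / 2 * (1 / ((k : ℝ) + 1)) with hq
  have hq0 : 0 < q := by positivity
  have v := Real.log_le_log (by positivity) (hk n)
  rw [Real.log_mul (by positivity) (by positivity), Real.log_inv, Real.log_pow, Real.log_pow,
    Real.log_mul (by positivity) (by positivity), Real.log_pow] at v
  have hlq : ((k : ℝ) + 1) * Real.log q ≤ ε / 2 := by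
    have h1 := Real.log_le_sub_one_of_pos hq0
    have h2 : Real.log q ≤ ε / 2 * (1 / ((k : ℝ) + 1)) := by linarith
    calc _ ≤ ((k : ℝ) + 1) * (ε / 2 * (1 / ((k : ℝ) + 1))) := by gcongr
      _ = _ := by field_simp
  push_cast at v
  set I := Real.log (∫ ω, Z n ω ∂μ)
  have hupper : 1 / (n : ℝ) * I ≤ Real.log (φ l) := by
    rw [one_div, inv_mul_le_iff₀ hn0]; exact u
  have hlower : Real.log (φ l) - ((k : ℝ) + 1) * Real.log q
      - ((k : ℝ) + 1) * (Real.log ((n : ℝ) + 1) / n) ≤ 1 / (n : ℝ) * I := by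
    rw [one_div, le_inv_mul_iff₀ hn0]
    refine le_trans (le_of_eq ?_) v
    field_simp
    ring
  rw [Real.dist_eq, abs_lt]
  constructor <;> linarith
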